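/- Let R be a finite group. Every automorphism of R is a power automorphism (that is, Aut(R) = PAut(R)) if and only if R is cyclic. -/

import Mathlib

/-!
If every automorphism is a power automorphism, then so are the inner ones, hence every subgroup is
normal. Suppose that `R` is not abelian, and take a noncentral `y`: of infinite order if there is
one, and of least order otherwise. In the second case the order of `y` is `4`: it is a prime power
`p ^ (n + 1)`, and if `x` does not commute with `y`, multiplying `y` by a suitable power of `x`
gives a noncentral element with trivial `p ^ n`-th power, unless `p ^ n = 2`. In both cases `y` is
conjugate only to `y` and `y⁻¹`, and then fixing the centralizer of `y` pointwise and sending every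
other `g` to `y * g` is an automorphism. Being a power automorphism, it puts `y` in `⟨g⟩` for every
`g` that does not commute with `y`, which is absurd.

If `R` is abelian and finitely generated, it is a product of cyclic groups `ZMod (n i)`. A
homomorphism `φ` from the `i`-th factor to another one gives the automorphism `x ↦ φ (x i) * x`, so
`φ` is trivial; hence the `n i` are pairwise coprime and the product is cyclic.
-/

open Subgroup
open scoped commutatorElement

section CommutatorElement

variable {G : Type*} [Group G] {x y : G}

theorem commutatorElement_pow_right (h : Commute ⁅x, y⁆ y) (n : ℕ) : ⁅x, y ^ n⁆ = ⁅x, y⁆ ^ n := by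
  have hconj : x * y * x⁻¹ = ⁅x, y⁆ * y := by rw [commutatorElement_def]; group
  rw [commutatorElement_def, ← conj_pow, hconj, h.mul_pow, mul_inv_cancel_right]

theorem commutatorElement_pow_left (h : Commute ⁅x, y⁆ x) (n : ℕ) : ⁅x ^ n, y⁆ = ⁅x, y⁆ ^ n := by
  have h' : Commute ⁅y, x⁆ x := by rw [← commutatorElement_inv]; exact h.inv_left
  rw [← commutatorElement_inv, commutatorElement_pow_right h', ← inv_pow, commutatorElement_inv]

theorem mul_pow_eq_commutatorElement_pow_choose_mul (hx : Commute ⁅y, x⁆ x)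
    (hy : Commute ⁅y, x⁆ y) (n : ℕ) :
    (x * y) ^ n = ⁅y, x⁆ ^ n.choose 2 * (x ^ n * y ^ n) := by
  induction n with
  | zero => simp
  | succ n ih =>
    have hswap : y ^ n * x = ⁅y, x⁆ ^ n * (x * y ^ n) := by
      rw [← commutatorElement_pow_left hy, commutatorElement_def]; group
    have hcomm : x ^ n * ⁅y, x⁆ ^ n = ⁅y, x⁆ ^ n * x ^ n := (hx.pow_pow n n).symm
    calc (x * y) ^ (n + 1)
        = ⁅y, x⁆ ^ n.choose 2 * x ^ n * (y ^ n * x) * y := by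
          rw [pow_succ, ih]; simp only [mul_assoc]
      _ = ⁅y, x⁆ ^ n.choose 2 * (x ^ n * ⁅y, x⁆ ^ n) * x * y ^ n * y := by
          rw [hswap]; simp only [mul_assoc]
      _ = ⁅y, x⁆ ^ (n + 1).choose 2 * (x ^ (n + 1) * y ^ (n + 1)) := by
          rw [hcomm, Nat.choose_succ_succ' n 1, Nat.choose_one_right, add_comm n, pow_add,
            pow_succ x, pow_succ y]
          simp only [mul_assoc]

end CommutatorElement

section Zpowers

variable {G : Type*} [Group G] {x c : G}

theorem commute_of_mem_zpowers (h : c ∈ zpowers x) : Commute c x := by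
  obtain ⟨k, rfl⟩ := mem_zpowers_iff.1 h
  exact Commute.zpow_self x k

theorem mem_zpowers_pow_of_pow_eq_one {d m : ℕ} (hc : c ∈ zpowers x) (hcm : c ^ m = 1)
    (hm : m ≠ 0) (hdm : d * m ∣ orderOf x) : c ∈ zpowers (x ^ d) := by
  obtain ⟨j, rfl⟩ := mem_zpowers_iff.1 hc
  have hord : (orderOf x : ℤ) ∣ j * m := by
    rw [orderOf_dvd_iff_zpow_eq_one, zpow_mul, zpow_natCast, hcm]
  have hdvd : (d : ℤ) * m ∣ j * m := (by exact_mod_cast hdm : (d : ℤ) * m ∣ orderOf x).trans hord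
  obtain ⟨k, rfl⟩ := Int.dvd_of_mul_dvd_mul_right (Nat.cast_ne_zero.2 hm) hdvd
  exact mem_zpowers_iff.2 ⟨k, by rw [zpow_mul, zpow_natCast]⟩

theorem exists_commute_pow_mul_pow_eq_one {y : G} {d : ℕ} (h : y ^ d ∈ zpowers (x ^ d)) :
    ∃ u, Commute u x ∧ u ^ d * y ^ d = 1 := by
  obtain ⟨k, hk⟩ := mem_zpowers_iff.1 h
  have hcomm : Commute (x ^ (-k)) x := Commute.zpow_self x (-k)
  refine ⟨x ^ (-k), hcomm, ?_⟩
  rw [← hk, ← zpow_natCast x d, zpow_comm, zpow_natCast, zpow_neg, inv_pow, inv_mul_cancel]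

theorem mem_zpowers_of_prime_orderOf (hx : (orderOf x).Prime) (hc : c ∈ zpowers x) (hc1 : c ≠ 1) :
    x ∈ zpowers c := by
  obtain ⟨j, rfl⟩ := mem_zpowers_iff.1 hc
  rw [mem_zpowers_zpow_iff, Int.gcd_comm]
  refine (Nat.Prime.coprime_iff_not_dvd hx).2 fun hdvd ↦ hc1 ?_
  exact orderOf_dvd_iff_zpow_eq_one.1 (Int.natCast_dvd.2 hdvd)

end Zpowers

/-- A Dedekind group: every subgroup is normal. -/
def IsDedekindGroup (R : Type*) [Group R] : Prop :=
  ∀ H : Subgroup R, H.Normal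

namespace IsDedekindGroup

variable {R : Type*} [Group R] {x y : R}

theorem commutatorElement_mem_inf (hR : IsDedekindGroup R) (x y : R) :
    ⁅x, y⁆ ∈ zpowers x ⊓ zpowers y :=
  have := hR (zpowers x)
  have := hR (zpowers y)
  commutator_le_inf _ _ (commutator_mem_commutator (mem_zpowers x) (mem_zpowers y))

theorem commute_commutatorElement_left (hR : IsDedekindGroup R) (x y : R) : Commute ⁅x, y⁆ x :=
  commute_of_mem_zpowers (hR.commutatorElement_mem_inf x y).1

theorem commute_commutatorElement_right (hR : IsDedekindGroup R) (x y : R) : Commute ⁅x, y⁆ y :=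
  commute_of_mem_zpowers (hR.commutatorElement_mem_inf x y).2

theorem conj_eq_or_eq_inv (hR : IsDedekindGroup R)
    (hx : ∀ u : (ZMod (orderOf x))ˣ, u = 1 ∨ u = -1) (g : R) :
    g * x * g⁻¹ = x ∨ g * x * g⁻¹ = x⁻¹ := by
  obtain ⟨k, hk⟩ := mem_zpowers_iff.1 ((hR (zpowers x)).conj_mem x (mem_zpowers x) g)
  obtain ⟨l, hl⟩ := mem_zpowers_iff.1 ((hR (zpowers x)).conj_mem x (mem_zpowers x) g⁻¹)
  have hkl : x ^ (k * l) = x ^ (1 : ℤ) := by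
    rw [zpow_mul, hk, conj_zpow, hl]
    group
  have hunit : (k : ZMod (orderOf x)) * l = 1 := by
    exact_mod_cast (ZMod.intCast_eq_intCast_iff _ _ _).2 (zpow_eq_zpow_iff_modEq.1 hkl)
  have hpow {m : ℤ} (hm : (k : ZMod (orderOf x)) = m) : g * x * g⁻¹ = x ^ m := by
    rw [← hk, zpow_eq_zpow_iff_modEq]
    exact (ZMod.intCast_eq_intCast_iff _ _ _).1 hm
  refine (hx (Units.mkOfMulEqOne _ _ hunit)).imp (fun h ↦ ?_) (fun h ↦ ?_)
  · simpa using hpow (m := 1) (by simpa using congrArg Units.val h)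
  · simpa using hpow (m := -1) (by simpa using congrArg Units.val h)

section MinimalFor

variable (hR : IsDedekindGroup R) (hy : MinimalFor (· ∉ center R) orderOf y) (hy0 : orderOf y ≠ 0)
include hR hy hy0

theorem commutatorElement_pow_eq_one {q : ℕ} (hq : 1 < q) (hqy : q ∣ orderOf y) (x : R) :
    ⁅x, y⁆ ^ q = 1 := by
  have hlt : orderOf (y ^ q) < orderOf y := by
    rw [orderOf_pow_of_dvd (Nat.ne_zero_of_lt hq) hqy]
    exact Nat.div_lt_self (Nat.pos_of_ne_zero hy0) hq
  have hcenter : y ^ q ∈ center R := not_not.1 (hy.not_prop_of_lt hlt)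
  rw [← commutatorElement_pow_right (hR.commute_commutatorElement_right x y)]
  exact commutatorElement_eq_one_iff_mul_comm.2 (mem_center_iff.1 hcenter x)

theorem orderOf_commutatorElement {p : ℕ} (hp : p.Prime) (hpy : p ∣ orderOf y)
    (hxy : ¬Commute x y) : orderOf ⁅x, y⁆ = p :=
  have := Fact.mk hp
  orderOf_eq_prime (hR.commutatorElement_pow_eq_one hy hy0 hp.one_lt hpy x)
    (mt commutatorElement_eq_one_iff_commute.1 hxy)

theorem isPrimePow_orderOf (hxy : ¬Commute x y) : IsPrimePow (orderOf y) := by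
  have hy1 : orderOf y ≠ 1 := by
    intro h
    exact hxy (orderOf_eq_one_iff.1 h ▸ Commute.one_right x)
  obtain ⟨p, hp, hpy⟩ := Nat.exists_prime_and_dvd hy1
  refine isPrimePow_iff_unique_prime_dvd.2 ⟨p, ⟨hp, hpy⟩, fun q ⟨hq, hqy⟩ ↦ ?_⟩
  rw [← hR.orderOf_commutatorElement hy hy0 hq hqy hxy,
    hR.orderOf_commutatorElement hy hy0 hp hpy hxy]

-- Passing from `x` to its `p`-part keeps it noncentral, so the order of that part is at least
-- `orderOf y`, and both orders are powers of `p`.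
theorem orderOf_dvd_orderOf (hxy : ¬Commute x y) : orderOf y ∣ orderOf x := by
  obtain ⟨p, n, hp, hn, hpn⟩ := (isPrimePow_nat_iff _).1 (hR.isPrimePow_orderOf hy hy0 hxy)
  have hpc := hR.orderOf_commutatorElement hy hy0 hp (hpn ▸ dvd_pow_self p hn.ne') hxy
  rcases eq_or_ne (orderOf x) 0 with hx0 | hx0
  · exact hx0 ▸ dvd_zero _
  obtain ⟨a, r, hpr, hx⟩ := Nat.exists_eq_pow_mul_and_not_dvd hx0 p hp.ne_one
  have hr0 : r ≠ 0 := by rintro rfl; exact hpr (dvd_zero p)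
  have hxr : orderOf (x ^ r) = p ^ a := by
    rw [orderOf_pow_of_dvd hr0 (hx ▸ dvd_mul_left r _), hx,
      Nat.mul_div_cancel _ (Nat.pos_of_ne_zero hr0)]
  have hcr : ⁅x ^ r, y⁆ ≠ 1 := by
    rwa [commutatorElement_pow_left (hR.commute_commutatorElement_left x y), Ne,
      ← orderOf_dvd_iff_pow_eq_one, hpc]
  have hle : orderOf y ≤ orderOf (x ^ r) := hy.le fun hmem ↦ hcr <|
    commutatorElement_eq_one_iff_mul_comm.2 (mem_center_iff.1 hmem y).symm
  rw [hxr, ← hpn, Nat.pow_le_pow_iff_right hp.one_lt] at hle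
  rw [← hpn, hx]
  exact (pow_dvd_pow p hle).mul_right r

theorem pow_mem_zpowers_pow {p d : ℕ} (hp : p.Prime) (hd : orderOf y = d * p)
    (hxy : ¬Commute x y) : y ^ d ∈ zpowers (x ^ d) := by
  have hcp := hR.commutatorElement_pow_eq_one hy hy0 hp.one_lt (hd ▸ dvd_mul_left p d) x
  obtain ⟨hcx, hcy⟩ := hR.commutatorElement_mem_inf x y
  have hyd : orderOf (y ^ d) = p := by
    have hd0 : d ≠ 0 := left_ne_zero_of_mul (hd ▸ hy0)
    rw [orderOf_pow_of_dvd hd0 (hd ▸ dvd_mul_right d p), hd,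
      Nat.mul_div_cancel_left _ (Nat.pos_of_ne_zero hd0)]
  have hyd_c : y ^ d ∈ zpowers ⁅x, y⁆ :=
    mem_zpowers_of_prime_orderOf (hyd ▸ hp)
      (mem_zpowers_pow_of_pow_eq_one hcy hcp hp.ne_zero hd.symm.dvd)
      (mt commutatorElement_eq_one_iff_commute.1 hxy)
  exact mem_zpowers_pow_of_pow_eq_one (zpowers_le.2 hcx hyd_c)
    (by rw [← pow_mul, ← hd, pow_orderOf_eq_one]) hp.ne_zero
    (hd ▸ hR.orderOf_dvd_orderOf hy hy0 hxy)

theorem mul_pow_eq_one {q d : ℕ} (hq : 1 < q) (hqy : q ∣ orderOf y) (hqd : q ∣ d.choose 2)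
    {u : R} (hu : u ^ d * y ^ d = 1) : (u * y) ^ d = 1 := by
  obtain ⟨t, ht⟩ := hqd
  rw [mul_pow_eq_commutatorElement_pow_choose_mul (hR.commute_commutatorElement_right y u)
    (hR.commute_commutatorElement_left y u), hu, mul_one, ht, pow_mul, ← commutatorElement_inv,
    inv_pow, hR.commutatorElement_pow_eq_one hy hy0 hq hqy, inv_one, one_pow]

theorem orderOf_eq_four : orderOf y = 4 := by
  obtain ⟨x, hxy⟩ : ∃ x, ¬Commute x y := by
    simpa [mem_center_iff, commute_iff_eq] using hy.prop
  obtain ⟨p, k, hp, hk, hpk⟩ := (isPrimePow_nat_iff _).1 (hR.isPrimePow_orderOf hy hy0 hxy)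
  obtain ⟨n, rfl⟩ := Nat.exists_eq_add_one_of_ne_zero hk.ne'
  have hord : orderOf y = p ^ n * p := by rw [← hpk, pow_succ]
  obtain ⟨u, hux, hu⟩ :=
    exists_commute_pow_mul_pow_eq_one (hR.pow_mem_zpowers_pow hy hy0 hp hord hxy)
  have huy : u * y ∉ center R := fun hmem ↦ hxy <| by
    simpa using hux.symm.inv_right.mul_right (mem_center_iff.1 hmem x)
  have hne : (u * y) ^ p ^ n ≠ 1 := fun h ↦ hy.not_lt huy <|
    calc orderOf (u * y) ≤ p ^ n := orderOf_le_of_pow_eq_one (pow_pos hp.pos n) h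
      _ < orderOf y := hpk ▸ Nat.pow_lt_pow_right hp.one_lt n.lt_succ_self
  have hpn : p ^ n = 2 := by
    by_contra hpn
    exact hne <| hR.mul_pow_eq_one hy hy0 hp.one_lt (hord ▸ dvd_mul_left p _)
      (hp.dvd_choose_pow two_ne_zero (Ne.symm hpn)) hu
  obtain ⟨rfl, -⟩ := (Nat.Prime.pow_eq_iff Nat.prime_two).1 hpn
  rw [hord, hpn]

end MinimalFor

-- An element of infinite order has `orderOf` equal to `0`, the least value, and `ZMod 0` is `ℤ`.
theorem units_zmod_orderOf_eq_one_or (hR : IsDedekindGroup R)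
    (hy : MinimalFor (· ∉ center R) orderOf y) (u : (ZMod (orderOf y))ˣ) : u = 1 ∨ u = -1 := by
  rcases eq_or_ne (orderOf y) 0 with hy0 | hy0
  · revert u
    rw [hy0]
    exact Int.units_eq_one_or
  · revert u
    rw [hR.orderOf_eq_four hy hy0]
    decide

end IsDedekindGroup

/-- The automorphism `g ↦ f g * g` attached to a crossed homomorphism `f` for the conjugation
action of `R` on itself. The condition `f (f g) = 1` provides the inverse `g ↦ (f g)⁻¹ * g`. -/
def mulAutOfCrossedHom {R : Type*} [Group R] (f : R → R)
    (hf : ∀ g h, f (g * h) = f g * (g * f h * g⁻¹)) (hff : ∀ g, f (f g) = 1) : MulAut R where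
  toFun g := f g * g
  invFun g := (f g)⁻¹ * g
  left_inv g := by simp [hf, hff]
  right_inv g := by
    have hf1 : f 1 = 1 := by simpa using hf 1 1
    have hinv : f (f g)⁻¹ = 1 := by simpa [hf1, hff] using (hf (f g) (f g)⁻¹).symm
    simp [hf, hinv]
  map_mul' g h := by simp [hf, mul_assoc]

/-- All automorphisms of `R` are power automorphisms, i.e. `Aut(R) = PAut(R)`. -/
def AllAutPower (R : Type*) [Group R] : Prop :=
  ∀ α : MulAut R, ∀ x : R, α x ∈ zpowers x

namespace AllAutPower

variable {R : Type*} [Group R]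

theorem of_isCyclic [IsCyclic R] : AllAutPower R := fun α x ↦
  have ⟨m, hm⟩ := MonoidHom.map_cyclic (α : R →* R)
  ⟨m, (hm x).symm⟩

theorem congr {S : Type*} [Group S] (hR : AllAutPower R) (e : R ≃* S) : AllAutPower S := by
  intro α x
  obtain ⟨k, hk⟩ := mem_zpowers_iff.1 (hR ((e.trans α).trans e.symm) (e.symm x))
  exact mem_zpowers_iff.2 ⟨k, by simpa using congrArg e hk⟩

theorem isDedekindGroup (hR : AllAutPower R) : IsDedekindGroup R :=
  fun _ ↦ ⟨fun n hn g ↦ zpowers_le.2 hn (hR (MulAut.conj g) n)⟩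

theorem crossedHom_apply_mem_zpowers (hR : AllAutPower R) {f : R → R}
    (hf : ∀ g h, f (g * h) = f g * (g * f h * g⁻¹)) (hff : ∀ g, f (f g) = 1) (g : R) :
    f g ∈ zpowers g :=
  (mul_mem_cancel_right (mem_zpowers g)).1 (hR (mulAutOfCrossedHom f hf hff) g)

theorem mem_center_of_conj_eq_or_eq_inv (hR : AllAutPower R) {x : R}
    (hx : ∀ g, g * x * g⁻¹ = x ∨ g * x * g⁻¹ = x⁻¹) : x ∈ center R := by
  classical
  by_contra hmem
  obtain ⟨g, hgx⟩ : ∃ g, ¬Commute g x := by simpa [mem_center_iff, commute_iff_eq] using hmem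
  have hgx' : g * x * g⁻¹ ≠ x := mt mul_inv_eq_iff_eq_mul.1 hgx
  have hxx : x⁻¹ ≠ x := fun h ↦ hgx' ((hx g).elim id (·.trans h))
  let f (g : R) : R := if g * x * g⁻¹ = x then 1 else x
  have hf (g h : R) : f (g * h) = f g * (g * f h * g⁻¹) := by
    have hgh : g * h * x * (g * h)⁻¹ = g * (h * x * h⁻¹) * g⁻¹ := by group
    rcases hx g with hg | hg <;> rcases hx h with hh | hh <;>
      simp [f, hgh, hg, hh, hxx, -mul_inv_rev, ← conj_inv]
  have hff (g : R) : f (f g) = 1 := by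
    by_cases hg : g * x * g⁻¹ = x <;> simp [f, hg]
  have hfg : x ∈ zpowers g := by
    simpa only [f, if_neg hgx'] using hR.crossedHom_apply_mem_zpowers hf hff g
  exact hgx (commute_of_mem_zpowers hfg).symm

theorem center_eq_top (hR : AllAutPower R) : center R = ⊤ := by
  by_contra hne
  obtain ⟨y, hy⟩ := exists_minimalFor_of_wellFoundedLT (· ∉ center R) orderOf <| by
    simpa [eq_top_iff'] using hne
  have hconj := hR.isDedekindGroup.conj_eq_or_eq_inv
    (hR.isDedekindGroup.units_zmod_orderOf_eq_one_or hy)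
  exact hy.prop (hR.mem_center_of_conj_eq_or_eq_inv hconj)

theorem monoidHom_eq_one_of_pi {ι : Type*} {G : ι → Type*} [∀ i, CommGroup (G i)]
    (hG : AllAutPower (∀ i, G i)) {i j : ι} (hij : i ≠ j) (φ : G i →* G j) : φ = 1 := by
  classical
  let f (x : ∀ i, G i) : ∀ i, G i := Pi.mulSingle j (φ (x i))
  ext a
  obtain ⟨k, hk⟩ := mem_zpowers_iff.1 <| hG.crossedHom_apply_mem_zpowers (f := f)
    (by simp [f, Pi.mulSingle_mul]) (by simp [f, hij]) (Pi.mulSingle i a)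
  simpa [f, hij.symm] using (congrFun hk j).symm

end AllAutPower

theorem exists_zmod_addMonoidHom_ne_zero {m n : ℕ} (hn : n ≠ 0) (h : ¬m.Coprime n) :
    ∃ f : ZMod m →+ ZMod n, f ≠ 0 := by
  let d := n / m.gcd n
  have hm : (m * d : ℕ) = (0 : ZMod n) := by
    rw [ZMod.natCast_eq_zero_iff, ← Nat.mul_div_assoc m (m.gcd_dvd_right n)]
    exact Nat.dvd_lcm_right m n
  have hd : (d : ZMod n) ≠ 0 := by
    rw [Ne, ZMod.natCast_eq_zero_iff]
    have hlt : d < n := Nat.div_lt_self (Nat.pos_of_ne_zero hn) <|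
      lt_of_le_of_ne (Nat.gcd_pos_of_pos_right m (Nat.pos_of_ne_zero hn)) (Ne.symm h)
    exact Nat.not_dvd_of_pos_of_lt (Nat.div_gcd_pos_of_pos_right m (Nat.pos_of_ne_zero hn)) hlt
  let φ : {f : ℤ →+ ZMod n // f m = 0} := ⟨zmultiplesHom (ZMod n) d, by simpa using hm⟩
  have hφ : ZMod.lift m φ 1 = d := by simpa [φ] using ZMod.lift_coe m φ 1
  exact ⟨ZMod.lift m φ, fun h0 ↦ hd (by rw [← hφ, h0, AddMonoidHom.zero_apply])⟩

theorem coprime_of_forall_zmod_addMonoidHom_eq_zero {m n : ℕ}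
    (hmn : ∀ f : ZMod m →+ ZMod n, f = 0) (hnm : ∀ f : ZMod n →+ ZMod m, f = 0) :
    m.Coprime n := by
  by_contra h
  rcases eq_or_ne n 0 with rfl | hn
  · rcases eq_or_ne m 0 with rfl | hm
    · exact one_ne_zero (DFunLike.congr_fun (hmn (AddMonoidHom.id (ZMod 0))) 1)
    · obtain ⟨f, hf⟩ := exists_zmod_addMonoidHom_ne_zero hm (mt Nat.Coprime.symm h)
      exact hf (hnm f)
  · obtain ⟨f, hf⟩ := exists_zmod_addMonoidHom_ne_zero hn h
    exact hf (hmn f)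

theorem isCyclic_pi_zmod {ι : Type*} [Finite ι] {n : ι → ℕ}
    (hn : Pairwise (Function.onFun Nat.Coprime n)) :
    IsCyclic (∀ i, Multiplicative (ZMod (n i))) :=
  have := Fintype.ofFinite ι
  ((ZMod.prodEquivPi n hn).toAddEquiv.toMultiplicative.trans
    (MulEquiv.piMultiplicative _)).isCyclic.1 inferInstance

theorem AllAutPower.pairwise_coprime {ι : Type*} {n : ι → ℕ}
    (hn : AllAutPower (∀ i, Multiplicative (ZMod (n i)))) :
    Pairwise (Function.onFun Nat.Coprime n) := by
  have hzero {i j : ι} (hij : i ≠ j) (f : ZMod (n i) →+ ZMod (n j)) : f = 0 :=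
    AddMonoidHom.toMultiplicative.injective (hn.monoidHom_eq_one_of_pi hij f.toMultiplicative)
  exact fun i j hij ↦ coprime_of_forall_zmod_addMonoidHom_eq_zero (hzero hij) (hzero hij.symm)

theorem exists_mulEquiv_pi_zmod (G : Type*) [CommGroup G] [Group.FG G] :
    ∃ (ι : Type) (_ : Finite ι) (n : ι → ℕ),
      Nonempty (G ≃* ∀ i, Multiplicative (ZMod (n i))) := by
  obtain ⟨ι, κ, _, _, p, -, e, ⟨f⟩⟩ := CommGroup.equiv_free_prod_prod_multiplicative_zmod G
  -- `ZMod 0` is `ℤ`.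
  let n : κ ⊕ ι → ℕ := Sum.elim 0 (fun i ↦ p i ^ e i)
  let E : (∀ i, Multiplicative (ZMod (n i))) ≃*
      (κ → Multiplicative ℤ) × ∀ i, Multiplicative (ZMod (p i ^ e i)) :=
    { Equiv.sumPiEquivProdPi fun i ↦ Multiplicative (ZMod (n i)) with map_mul' := fun _ _ ↦ rfl }
  exact ⟨κ ⊕ ι, inferInstance, n, ⟨f.trans E.symm⟩⟩

theorem stmt4_general (R : Type*) [Group R] [Group.FG R] :
    (∀ α : MulAut R, ∀ x : R, α x ∈ Subgroup.zpowers x) ↔ IsCyclic R := by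
  refine ⟨fun hR : AllAutPower R ↦ ?_, fun _ ↦ AllAutPower.of_isCyclic⟩
  let := Group.commGroupOfCenterEqTop hR.center_eq_top
  obtain ⟨ι, _, n, ⟨e⟩⟩ := exists_mulEquiv_pi_zmod R
  exact e.isCyclic.2 (isCyclic_pi_zmod (hR.congr e).pairwise_coprime)

/-- For a finite group `R`, every automorphism of `R` is a power automorphism
(`Aut(R) = PAut(R)`) if and only if `R` is cyclic. -/
theorem stmt4 (R : Type*) [Group R] [Finite R] :
    (∀ α : MulAut R, ∀ x : R, α x ∈ Subgroup.zpowers x) ↔ IsCyclic R :=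
  stmt4_general R
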